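/- For the scalar system ẋ(t) = ax(t) + bu(t) with a < 0 and b ≠ 0, the value function of the maximum hands-off control problem is given explicitly, for every ξ in the reachable set R, by V(ξ) = T + a⁻¹·log(e^{-aT} + a·|b⁻¹ξ|). -/

import Mathlib

open MeasureTheory Set

noncomputable section

/-- The magnitude constraint `‖u‖_∞ ≤ 1` on `[0,T]`. -/
def MagBdd (T : ℝ) (u : ℝ → ℝ) : Prop := ∀ t ∈ Icc (0:ℝ) T, |u t| ≤ 1

/-- The `L⁰` norm of `u`: Lebesgue measure of `{t ∈ [0,T] : u t ≠ 0}`. -/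
def L0Norm (T : ℝ) (u : ℝ → ℝ) : ℝ := (volume {t ∈ Icc (0:ℝ) T | u t ≠ 0}).toReal

/-- `∫₀ᵀ e^{-as} b u(s) ds` for the scalar system. -/
def stateInt1 (T a b : ℝ) (u : ℝ → ℝ) : ℝ :=
  ∫ s in Icc (0:ℝ) T, Real.exp (-(a * s)) * b * u s

/-- The reachable set `R` of the scalar system. -/
def Reach1 (T a b : ℝ) : Set ℝ :=
  {x | ∃ u, Measurable u ∧ MagBdd T u ∧ x = stateInt1 T a b u}

/-- Admissible controls for the scalar system, steering `ξ` to `0` at time `T`. -/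
def Admissible1 (T a b : ℝ) (ξ : ℝ) (u : ℝ → ℝ) : Prop :=
  Measurable u ∧ MagBdd T u ∧ stateInt1 T a b u = -ξ

/-- Value function of the maximum hands-off control problem for the scalar system. -/
def V0s (T a b : ℝ) (ξ : ℝ) : ℝ :=
  sInf {c | ∃ u, Admissible1 T a b ξ u ∧ c = L0Norm T u}

/-!
The control enters through `b * ∫ e^{-as} u(s) ds`, and for `a < 0` the weight `e^{-as}` increases
in `s`. By the bathtub principle, among controls with `|u| ≤ 1` a prescribed value of the integral
is reached with the smallest support by keeping `u` equal to a constant sign on a superlevel set of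
the weight, that is, on a final interval `[s, T]`, and zero before. The switching time `s` is
determined by `∫ x in s..T, e^{-ax} = |b⁻¹ξ|`, and `V(ξ) = T - s`.
-/

section Bathtub

variable {X E : Type*} [NormedAddCommGroup E] [NormedSpace ℝ E]
  {w : X → ℝ} {u : X → E} {S : Set X} {c : ℝ}

lemma norm_smul_le_indicator_add_mul_indicator_sub {x : X} (hw : 0 ≤ w x) (hu : ‖u x‖ ≤ 1)
    (hS : x ∈ S → c ≤ w x) (hSc : x ∉ S → w x ≤ c) :
    ‖w x • u x‖ ≤ S.indicator w x +
      c * ((Function.support u).indicator 1 x - S.indicator 1 x) := by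
  have hwu : ‖w x • u x‖ ≤ w x := by
    rw [norm_smul, Real.norm_of_nonneg hw]
    exact mul_le_of_le_one_right hw hu
  by_cases hxS : x ∈ S <;> by_cases hxu : u x = 0
  · simpa [hxS, hxu] using hS hxS
  · simpa [hxS, hxu] using hwu
  · simp [hxS, hxu]
  · simpa [hxS, hxu] using hwu.trans (hSc hxS)

variable [MeasurableSpace X] {μ : Measure X} [IsFiniteMeasure μ]

theorem norm_integral_smul_le_setIntegral_add (hw_int : Integrable w μ) (hw : ∀ᵐ x ∂μ, 0 ≤ w x)
    (hu_meas : AEStronglyMeasurable u μ) (hu : ∀ᵐ x ∂μ, ‖u x‖ ≤ 1) (hS_meas : MeasurableSet S)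
    (hS : ∀ᵐ x ∂μ, x ∈ S → c ≤ w x) (hSc : ∀ᵐ x ∂μ, x ∉ S → w x ≤ c) :
    ‖∫ x, w x • u x ∂μ‖ ≤
      ∫ x in S, w x ∂μ + c * (μ.real (Function.support u) - μ.real S) := by
  have hsupp := hu_meas.nullMeasurableSet_support
  have hsupp_int : Integrable ((Function.support u).indicator (1 : X → ℝ)) μ :=
    (integrable_const 1).indicator₀ hsupp
  have hS_int : Integrable (S.indicator (1 : X → ℝ)) μ := (integrable_const 1).indicator hS_meas
  have hdiff_int : Integrable
      (fun x ↦ c * ((Function.support u).indicator 1 x - S.indicator 1 x)) μ :=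
    (hsupp_int.sub hS_int).const_mul c
  calc ‖∫ x, w x • u x ∂μ‖
      ≤ ∫ x, S.indicator w x +
          c * ((Function.support u).indicator 1 x - S.indicator 1 x) ∂μ := by
        refine norm_integral_le_of_norm_le ((hw_int.indicator hS_meas).add hdiff_int) ?_
        filter_upwards [hw, hu, hS, hSc] with x hwx hux hSx hScx
        exact norm_smul_le_indicator_add_mul_indicator_sub hwx hux hSx hScx
    _ = ∫ x in S, w x ∂μ + c * (μ.real (Function.support u) - μ.real S) := by
        rw [integral_add (hw_int.indicator hS_meas) hdiff_int, integral_const_mul,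
          integral_sub hsupp_int hS_int, integral_indicator hS_meas, integral_indicator₀ hsupp,
          integral_indicator_one hS_meas]
        simp

theorem measureReal_le_measureReal_support_of_setIntegral_le_norm (hw_int : Integrable w μ)
    (hw : ∀ᵐ x ∂μ, 0 ≤ w x) (hu_meas : AEStronglyMeasurable u μ) (hu : ∀ᵐ x ∂μ, ‖u x‖ ≤ 1)
    (hS_meas : MeasurableSet S) (hc : 0 < c) (hS : ∀ᵐ x ∂μ, x ∈ S → c ≤ w x)
    (hSc : ∀ᵐ x ∂μ, x ∉ S → w x ≤ c) (h : ∫ x in S, w x ∂μ ≤ ‖∫ x, w x • u x ∂μ‖) :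
    μ.real S ≤ μ.real (Function.support u) := by
  have hbound := norm_integral_smul_le_setIntegral_add hw_int hw hu_meas hu hS_meas hS hSc
  have : 0 ≤ c * (μ.real (Function.support u) - μ.real S) := by linarith
  exact sub_nonneg.mp (nonneg_of_mul_nonneg_right this hc)

end Bathtub

section SwitchTime

variable {T a c s t : ℝ}

lemma integrableOn_Icc_exp_neg_mul (a s t : ℝ) :
    IntegrableOn (fun x ↦ Real.exp (-(a * x))) (Icc s t) :=
  Continuous.integrableOn_Icc (by fun_prop)

lemma setIntegral_Icc_exp_neg_mul (ha : a ≠ 0) (hst : s ≤ t) :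
    ∫ x in Icc s t, Real.exp (-(a * x)) =
      (Real.exp (-(a * s)) - Real.exp (-(a * t))) / a := by
  simp_rw [integral_Icc_eq_integral_Ioc, ← intervalIntegral.integral_of_le hst, ← neg_mul]
  rw [intervalIntegral.integral_comp_mul_left Real.exp (neg_ne_zero.mpr ha), integral_exp,
    smul_eq_mul]
  field_simp
  ring

/-- The time `s` from which a unit control must act up to time `T` to satisfy
`∫ x in s..T, e^{-ax} = c`, obtained by solving `e^{-as} = e^{-aT} + a c`. -/
def switchTime (T a c : ℝ) : ℝ := -(a⁻¹ * Real.log (Real.exp (-(a * T)) + a * c))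

lemma exp_neg_mul_switchTime (ha : a ≠ 0) (hpos : 0 < Real.exp (-(a * T)) + a * c) :
    Real.exp (-(a * switchTime T a c)) = Real.exp (-(a * T)) + a * c := by
  rw [switchTime, mul_neg, neg_neg, mul_inv_cancel_left₀ ha, Real.exp_log hpos]

lemma switchTime_nonneg (ha : a < 0) (hone : 1 ≤ Real.exp (-(a * T)) + a * c) :
    0 ≤ switchTime T a c :=
  neg_nonneg.mpr (mul_nonpos_of_nonpos_of_nonneg (inv_nonpos.mpr ha.le) (Real.log_nonneg hone))

lemma switchTime_le (ha : a < 0) (hc : 0 ≤ c) (hpos : 0 < Real.exp (-(a * T)) + a * c) :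
    switchTime T a c ≤ T := by
  have hexp : Real.exp (-(a * switchTime T a c)) ≤ Real.exp (-(a * T)) := by
    rw [exp_neg_mul_switchTime ha.ne hpos]
    exact add_le_of_nonpos_right (mul_nonpos_of_nonpos_of_nonneg ha.le hc)
  exact (mul_le_mul_left_of_neg ha).mp (neg_le_neg_iff.mp (Real.exp_le_exp.mp hexp))

lemma setIntegral_Icc_switchTime_exp_neg_mul (ha : a < 0) (hc : 0 ≤ c)
    (hpos : 0 < Real.exp (-(a * T)) + a * c) :
    ∫ x in Icc (switchTime T a c) T, Real.exp (-(a * x)) = c := by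
  rw [setIntegral_Icc_exp_neg_mul ha.ne (switchTime_le ha hc hpos),
    exp_neg_mul_switchTime ha.ne hpos, add_sub_cancel_left, mul_div_cancel_left₀ c ha.ne]

end SwitchTime

section Control

variable {T a b s ξ σ : ℝ} {u : ℝ → ℝ}

lemma L0Norm_eq_measureReal_support (T : ℝ) (u : ℝ → ℝ) :
    L0Norm T u = (volume.restrict (Icc 0 T)).real (Function.support u) := by
  rw [measureReal_restrict_apply' measurableSet_Icc, inter_comm]
  rfl

lemma stateInt1_eq_mul_integral (T a b : ℝ) (u : ℝ → ℝ) :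
    stateInt1 T a b u = b * ∫ x in Icc 0 T, Real.exp (-(a * x)) * u x := by
  simp_rw [stateInt1, ← integral_const_mul, mul_left_comm b, mul_assoc]

lemma inv_mul_stateInt1 (hb : b ≠ 0) (T a : ℝ) (u : ℝ → ℝ) :
    b⁻¹ * stateInt1 T a b u = ∫ x in Icc 0 T, Real.exp (-(a * x)) * u x := by
  rw [stateInt1_eq_mul_integral, inv_mul_cancel_left₀ hb]

lemma MagBdd.abs_integral_le (hu : MagBdd T u) (a : ℝ) :
    |∫ x in Icc 0 T, Real.exp (-(a * x)) * u x| ≤ ∫ x in Icc 0 T, Real.exp (-(a * x)) := by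
  rw [← Real.norm_eq_abs]
  refine norm_integral_le_of_norm_le (integrableOn_Icc_exp_neg_mul a 0 T) ?_
  filter_upwards [ae_restrict_mem measurableSet_Icc] with x hx
  rw [norm_mul, Real.norm_of_nonneg (Real.exp_nonneg _)]
  exact mul_le_of_le_one_right (Real.exp_nonneg _) (hu x hx)

lemma one_le_exp_add_mul_of_mem_Reach1 (hT : 0 ≤ T) (ha : a < 0) (hb : b ≠ 0)
    (hξ : ξ ∈ Reach1 T a b) : 1 ≤ Real.exp (-(a * T)) + a * |b⁻¹ * ξ| := by
  obtain ⟨u, -, hu, rfl⟩ := hξ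
  have hbound := hu.abs_integral_le a
  rw [setIntegral_Icc_exp_neg_mul ha.ne hT, le_div_iff_of_neg ha, mul_zero, neg_zero,
    Real.exp_zero] at hbound
  rw [inv_mul_stateInt1 hb]
  linarith

theorem sub_le_L0Norm_of_setIntegral_le (ha : a < 0) (hs : 0 ≤ s) (hu_meas : Measurable u)
    (hu : MagBdd T u)
    (h : ∫ x in Icc s T, Real.exp (-(a * x)) ≤ |∫ x in Icc 0 T, Real.exp (-(a * x)) * u x|) :
    T - s ≤ L0Norm T u := by
  have hmono : Monotone fun x ↦ Real.exp (-(a * x)) := fun x y hxy ↦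
    Real.exp_le_exp.mpr (neg_le_neg (mul_le_mul_of_nonpos_left hxy ha.le))
  have hinter : Icc s T ∩ Icc 0 T = Icc s T :=
    inter_eq_left.mpr (Icc_subset_Icc_left hs)
  have hmem := ae_restrict_mem (μ := volume) (measurableSet_Icc (a := (0 : ℝ)) (b := T))
  calc T - s ≤ (volume.restrict (Icc 0 T)).real (Icc s T) := by
        rw [measureReal_restrict_apply measurableSet_Icc, hinter, Real.volume_real_Icc]
        exact le_max_left _ _
    _ ≤ (volume.restrict (Icc 0 T)).real (Function.support u) := by
        refine measureReal_le_measureReal_support_of_setIntegral_le_norm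
          (integrableOn_Icc_exp_neg_mul a 0 T) (ae_of_all _ fun x ↦ Real.exp_nonneg _)
          hu_meas.aestronglyMeasurable (hmem.mono hu) measurableSet_Icc
          (Real.exp_pos (-(a * s))) (ae_of_all _ fun x hx ↦ hmono hx.1)
          (hmem.mono fun x hx hxs ↦ hmono ?_) ?_
        · exact le_of_not_ge fun hsx ↦ hxs ⟨hsx, hx.2⟩
        · rwa [Measure.restrict_restrict measurableSet_Icc, hinter]
    _ = L0Norm T u := (L0Norm_eq_measureReal_support T u).symm

/-- The control that is switched off before time `s` and constantly equal to `σ` on `[s, T]`. -/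
def terminalControl (s T σ : ℝ) : ℝ → ℝ := (Icc s T).indicator fun _ ↦ σ

lemma measurable_terminalControl (s T σ : ℝ) : Measurable (terminalControl s T σ) :=
  measurable_const.indicator measurableSet_Icc

lemma magBdd_terminalControl (hσ : |σ| ≤ 1) : MagBdd T (terminalControl s T σ) := fun _ _ ↦
  (norm_indicator_le_norm_self (fun _ ↦ σ) _).trans hσ

lemma integral_exp_neg_mul_terminalControl (hs : 0 ≤ s) :
    ∫ x in Icc 0 T, Real.exp (-(a * x)) * terminalControl s T σ x =
      (∫ x in Icc s T, Real.exp (-(a * x))) * σ := by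
  simp_rw [terminalControl, ← indicator_mul_right (Icc s T) fun x ↦ Real.exp (-(a * x))]
  rw [setIntegral_indicator measurableSet_Icc,
    inter_eq_right.mpr (Icc_subset_Icc_left hs), integral_mul_const]

lemma L0Norm_terminalControl_le (hsT : s ≤ T) : L0Norm T (terminalControl s T σ) ≤ T - s := by
  rw [L0Norm_eq_measureReal_support, measureReal_restrict_apply' measurableSet_Icc,
    ← Real.volume_real_Icc_of_le hsT]
  exact measureReal_mono (inter_subset_left.trans support_indicator_subset) measure_Icc_lt_top.ne

theorem isLeast_L0Norm_admissible (ha : a < 0) (hb : b ≠ 0)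
    (hone : 1 ≤ Real.exp (-(a * T)) + a * |b⁻¹ * ξ|) :
    IsLeast {c | ∃ u, Admissible1 T a b ξ u ∧ c = L0Norm T u}
      (T - switchTime T a |b⁻¹ * ξ|) := by
  set s := switchTime T a |b⁻¹ * ξ|
  have hpos := one_pos.trans_le hone
  have hs : 0 ≤ s := switchTime_nonneg ha hone
  have hsT : s ≤ T := switchTime_le ha (abs_nonneg _) hpos
  have hweight : ∫ x in Icc s T, Real.exp (-(a * x)) = |b⁻¹ * ξ| :=
    setIntegral_Icc_switchTime_exp_neg_mul ha (abs_nonneg _) hpos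
  have hlower : ∀ u, Admissible1 T a b ξ u → T - s ≤ L0Norm T u := by
    rintro u ⟨hu_meas, hu, hu_state⟩
    refine sub_le_L0Norm_of_setIntegral_le ha hs hu_meas hu ?_
    rw [hweight, ← inv_mul_stateInt1 hb, hu_state, mul_neg, abs_neg]
  obtain ⟨σ, hσ, hσξ⟩ : ∃ σ : ℝ, |σ| ≤ 1 ∧ |b⁻¹ * ξ| * σ = -(b⁻¹ * ξ) := by
    refine ⟨-(SignType.sign (b⁻¹ * ξ) : ℝ), ?_, by rw [mul_neg, abs_mul_sign]⟩
    cases SignType.sign (b⁻¹ * ξ) <;> simp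
  have hadm : Admissible1 T a b ξ (terminalControl s T σ) := by
    refine ⟨measurable_terminalControl s T σ, magBdd_terminalControl hσ, ?_⟩
    rw [stateInt1_eq_mul_integral, integral_exp_neg_mul_terminalControl hs, hweight, hσξ, mul_neg,
      mul_inv_cancel_left₀ hb]
  refine ⟨⟨_, hadm, (hlower _ hadm).antisymm (L0Norm_terminalControl_le hsT)⟩, ?_⟩
  rintro _ ⟨u, hu, rfl⟩
  exact hlower u hu

end Control

theorem scalar_value_function_formula (T a b : ℝ) (hT : 0 < T) (ha : a < 0) (hb : b ≠ 0) :
    ∀ ξ ∈ Reach1 T a b,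
      V0s T a b ξ = T + a⁻¹ * Real.log (Real.exp (-(a * T)) + a * |b⁻¹ * ξ|) := by
  intro ξ hξ
  have hone := one_le_exp_add_mul_of_mem_Reach1 hT.le ha hb hξ
  rw [V0s, (isLeast_L0Norm_admissible ha hb hone).csInf_eq, switchTime, sub_neg_eq_add]
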